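/- Let e, b, c > 0 with e/b² ≥ 7/9 and c ≤ 1, let u(x) = c/(1+b²|x|²)², ρ = b³/(cπ²), and define v(x) = (−Δu(x) + 2e(2u(x) − ρ(u∗u)(x)))/(1 − u(x)). Then v(x) = 12c(b⁶|x|⁶(2e−b²) + b⁴|x|⁴(9e−7b²) + 4b²|x|²(3e−2b²) + (5e+16b²))/((1+b²|x|²)²(4+b²|x|²)²((1+b²|x|²)²−c)), and v(x) ≥ 0 for all x. -/

import Mathlib

open MeasureTheory Real

/-- The Euclidean Laplacian on ℝ³: sum of the second directional derivatives
along the standard basis directions. -/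
noncomputable def laplacian3 (f : EuclideanSpace ℝ (Fin 3) → ℝ)
    (x : EuclideanSpace ℝ (Fin 3)) : ℝ :=
  ∑ i : Fin 3,
    iteratedFDeriv ℝ 2 f x ![EuclideanSpace.single i 1, EuclideanSpace.single i 1]

open Filter Topology

lemma tendsto_inv_sq_add_sq_atTop (m : ℝ) :
    Tendsto (fun r : ℝ => (m ^ 2 + r ^ 2)⁻¹) atTop (𝓝 0) :=
  (tendsto_atTop_add_const_left _ _ (tendsto_pow_atTop two_ne_zero)).inv_tendsto_atTop

lemma tendsto_div_sq_add_sq_atTop (m : ℝ) :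
    Tendsto (fun r : ℝ => r / (m ^ 2 + r ^ 2)) atTop (𝓝 0) := by
  refine squeeze_zero' ?_ ?_ tendsto_inv_atTop_zero
  · filter_upwards [eventually_gt_atTop 0] with r hr
    positivity
  · filter_upwards [eventually_gt_atTop 0] with r hr
    rw [div_le_iff₀ (by positivity)]
    field_simp
    nlinarith [sq_nonneg m]

/-- An antiderivative of `r ^ 2 / (m ^ 2 + r ^ 2) ^ 4`. -/
noncomputable def radialPrimitive (m r : ℝ) : ℝ :=
  1 / 6 * (-(r / (m ^ 2 + r ^ 2)) * (m ^ 2 + r ^ 2)⁻¹ ^ 2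
    + 1 / (4 * m ^ 2) * (r / (m ^ 2 + r ^ 2) * (m ^ 2 + r ^ 2)⁻¹)
    + 3 / (8 * m ^ 4) * (r / (m ^ 2 + r ^ 2))
    + 3 / (8 * m ^ 5) * arctan (r / m))

lemma hasDerivAt_radialPrimitive {m : ℝ} (hm : 0 < m) (r : ℝ) :
    HasDerivAt (radialPrimitive m) (r ^ 2 / (m ^ 2 + r ^ 2) ^ 4) r := by
  have hD : m ^ 2 + r ^ 2 ≠ 0 := by positivity
  have h1 : HasDerivAt (fun r : ℝ => m ^ 2 + r ^ 2) (2 * r) r := by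
    simpa using (hasDerivAt_pow 2 r).const_add (m ^ 2)
  have hA := (hasDerivAt_id r).div h1 hD
  have hB := h1.inv hD
  have hT := ((hasDerivAt_id r).div_const m).arctan
  have := ((((hA.neg.mul (hB.pow 2)).add ((hA.mul hB).const_mul (1 / (4 * m ^ 2)))).add
    (hA.const_mul (3 / (8 * m ^ 4)))).add (hT.const_mul (3 / (8 * m ^ 5)))).const_mul (1 / 6)
  refine this.congr_deriv ?_
  have hE : 1 + (r / m) ^ 2 = (m ^ 2 + r ^ 2) / m ^ 2 := by field_simp
  simp only [id, Pi.div_apply, Pi.neg_apply, Pi.inv_apply, Pi.pow_apply, hE,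
    Nat.reduceSub, pow_one, Nat.cast_ofNat]
  field_simp
  ring

lemma tendsto_radialPrimitive {m : ℝ} (hm : 0 < m) :
    Tendsto (radialPrimitive m) atTop (𝓝 (π / 32 / m ^ 5)) := by
  have hA := tendsto_div_sq_add_sq_atTop m
  have hB := tendsto_inv_sq_add_sq_atTop m
  have hT : Tendsto (fun r : ℝ => arctan (r / m)) atTop (𝓝 (π / 2)) :=
    (tendsto_arctan_atTop.mono_right nhdsWithin_le_nhds).comp (tendsto_id.atTop_div_const hm)
  have := ((((hA.neg.mul (hB.pow 2)).add ((hA.mul hB).const_mul (1 / (4 * m ^ 2)))).add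
    (hA.const_mul (3 / (8 * m ^ 4)))).add (hT.const_mul (3 / (8 * m ^ 5)))).const_mul (1 / 6)
  have hlim : π / 32 / m ^ 5 = 1 / 6 * (-0 * 0 ^ 2 + 1 / (4 * m ^ 2) * (0 * 0)
      + 3 / (8 * m ^ 4) * 0 + 3 / (8 * m ^ 5) * (π / 2)) := by
    ring
  rw [hlim]
  exact this

lemma integral_inv_sq_add_norm_sq_pow_four {m : ℝ} (hm : 0 < m) :
    ∫ y : EuclideanSpace ℝ (Fin 3), 1 / (m ^ 2 + ‖y‖ ^ 2) ^ 4 = π ^ 2 / 8 / m ^ 5 := by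
  have hI : ∫ r in Set.Ioi (0 : ℝ), r ^ 2 / (m ^ 2 + r ^ 2) ^ 4 = π / 32 / m ^ 5 := by
    rw [integral_Ioi_of_hasDerivAt_of_nonneg' (fun r _ => hasDerivAt_radialPrimitive hm r)
      (fun r _ => by positivity) (tendsto_radialPrimitive hm)]
    simp [radialPrimitive]
  rw [integral_fun_norm_addHaar volume (fun r : ℝ => 1 / (m ^ 2 + r ^ 2) ^ 4)]
  simp only [finrank_euclideanSpace, Fintype.card_fin, smul_eq_mul, nsmul_eq_mul, mul_one_div,
    Nat.add_one_sub_one, Measure.real, EuclideanSpace.volume_ball_fin_three]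
  rw [hI, ENNReal.toReal_mul, ENNReal.toReal_ofReal (by positivity)]
  norm_num
  ring

lemma integrable_inv_sq_add_norm_sq_pow_four {m : ℝ} (hm : 0 < m) :
    Integrable fun y : EuclideanSpace ℝ (Fin 3) => 1 / (m ^ 2 + ‖y‖ ^ 2) ^ 4 := by
  rw [integrable_fun_norm_addHaar volume (f := fun r : ℝ => 1 / (m ^ 2 + r ^ 2) ^ 4)]
  simpa [div_eq_mul_inv] using
    integrableOn_Ioi_deriv_of_nonneg' (fun r _ => hasDerivAt_radialPrimitive hm r)
      (fun r _ => by positivity) (tendsto_radialPrimitive hm)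

/-- Feynman's parametrization of `1 / (A ^ 2 * B ^ 2)`. -/
lemma integral_feynman_sq_sq {A B : ℝ} (hA : 0 < A) (hB : 0 < B) :
    ∫ t in (0 : ℝ)..1, 6 * (t * (1 - t)) / (t * A + (1 - t) * B) ^ 4 = 1 / (A ^ 2 * B ^ 2) := by
  have hL : ∀ t ∈ Set.uIcc (0 : ℝ) 1, 0 < t * A + (1 - t) * B := by
    intro t ht
    rw [Set.uIcc_of_le zero_le_one] at ht
    rcases ht.1.eq_or_lt with rfl | h
    · simpa using hB
    · have := mul_pos h hA
      have := mul_nonneg (sub_nonneg.2 ht.2) hB.le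
      linarith
  have hderiv : ∀ t ∈ Set.uIcc (0 : ℝ) 1,
      HasDerivAt (fun t : ℝ => 6 / B ^ 2 * ((t / (t * A + (1 - t) * B)) ^ 2 / 2
        - A * ((t / (t * A + (1 - t) * B)) ^ 3 / 3)))
        (6 * (t * (1 - t)) / (t * A + (1 - t) * B) ^ 4) t := by
    intro t ht
    have h0 := (hL t ht).ne'
    have h1 : HasDerivAt (fun t : ℝ => t * A + (1 - t) * B) (A - B) t := by
      have := ((hasDerivAt_id t).mul_const A).add
        (((hasDerivAt_id t).const_sub 1).mul_const B)
      exact this.congr_deriv (by ring)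
    have hw := (hasDerivAt_id t).div h1 h0
    have := (((hw.pow 2).div_const 2).sub (((hw.pow 3).div_const 3).const_mul A)).const_mul
      (6 / B ^ 2)
    refine this.congr_deriv ?_
    have hnum : 1 * (t * A + (1 - t) * B) - t * (A - B) = B := by ring
    simp only [id, Pi.div_apply, hnum, Nat.reduceSub, pow_one, Nat.cast_ofNat]
    generalize hLdef : t * A + (1 - t) * B = L at h0
    field_simp
    rw [← hLdef]
    ring
  rw [intervalIntegral.integral_eq_sub_of_hasDerivAt hderiv]
  · field_simp
    ring
  · refine ContinuousOn.intervalIntegrable (ContinuousOn.div (by fun_prop) (by fun_prop) ?_)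
    exact fun t ht => (pow_pos (hL t ht) 4).ne'

lemma one_add_mul_mul_pos {a t : ℝ} (ha : 0 ≤ a) (ht : t ∈ Set.Icc (0 : ℝ) 1) :
    0 < 1 + t * (1 - t) * a := by
  have := mul_nonneg (mul_nonneg ht.1 (sub_nonneg.2 ht.2)) ha
  linarith

lemma integral_mul_div_sqrt_pow_five {a : ℝ} (ha : 0 ≤ a) :
    ∫ t in (0 : ℝ)..1, t * (1 - t) / √(1 + t * (1 - t) * a) ^ 5 = 8 / 3 / (4 + a) ^ 2 := by
  have hD : ∀ t ∈ Set.uIcc (0 : ℝ) 1, 0 < 1 + t * (1 - t) * a := by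
    intro t ht
    rw [Set.uIcc_of_le zero_le_one] at ht
    exact one_add_mul_mul_pos ha ht
  have hderiv : ∀ t ∈ Set.uIcc (0 : ℝ) 1,
      HasDerivAt (fun t : ℝ => (1 / (4 + a) * (t - 1 / 2)
        - (4 / (3 * (4 + a)) * (1 + 2 * a / (4 + a))) * (t - 1 / 2) ^ 3)
          / √(1 + t * (1 - t) * a) ^ 3)
        (t * (1 - t) / √(1 + t * (1 - t) * a) ^ 5) t := by
    intro t ht
    have hpos := hD t ht
    have h1 : HasDerivAt (fun t : ℝ => 1 + t * (1 - t) * a) ((1 - 2 * t) * a) t := by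
      have := (((hasDerivAt_id t).mul ((hasDerivAt_id t).const_sub 1)).mul_const a).const_add 1
      exact this.congr_deriv (by simp only [id]; ring)
    have hs := h1.sqrt hpos.ne'
    have hp := (hasDerivAt_id t).sub_const (1 / 2)
    have := ((hp.const_mul (1 / (4 + a))).sub ((hp.pow 3).const_mul
      (4 / (3 * (4 + a)) * (1 + 2 * a / (4 + a))))).div (hs.pow 3)
      (pow_pos (sqrt_pos.2 hpos) 3).ne'
    refine this.congr_deriv ?_
    have hm := sqrt_pos.2 hpos
    have hsq := sq_sqrt hpos.le
    simp only [id, Pi.pow_apply, Pi.sub_apply, Nat.reduceSub, Nat.cast_ofNat]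
    set m := √(1 + t * (1 - t) * a)
    have h4 : 4 + a ≠ 0 := by positivity
    field_simp
    rw [hsq]
    ring
  rw [intervalIntegral.integral_eq_sub_of_hasDerivAt hderiv]
  · have h4 : 4 + a ≠ 0 := by positivity
    norm_num
    field_simp
    ring
  · refine ContinuousOn.intervalIntegrable (ContinuousOn.div (by fun_prop) (by fun_prop) ?_)
    exact fun t ht => (pow_pos (sqrt_pos.2 (hD t ht)) 5).ne'

lemma feynman_denominator (x y : EuclideanSpace ℝ (Fin 3)) (t : ℝ) :
    t * (1 + ‖x - y‖ ^ 2) + (1 - t) * (1 + ‖y‖ ^ 2)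
      = (1 + t * (1 - t) * ‖x‖ ^ 2) + ‖y - t • x‖ ^ 2 := by
  rw [norm_sub_sq_real, norm_sub_sq_real, inner_smul_right, norm_smul, mul_pow, norm_eq_abs,
    sq_abs, real_inner_comm y x]
  ring

lemma integral_feynman_shifted (x : EuclideanSpace ℝ (Fin 3)) {t : ℝ}
    (ht : t ∈ Set.Icc (0 : ℝ) 1) :
    ∫ y : EuclideanSpace ℝ (Fin 3),
        6 * (t * (1 - t)) / (t * (1 + ‖x - y‖ ^ 2) + (1 - t) * (1 + ‖y‖ ^ 2)) ^ 4
      = 3 * π ^ 2 / 4 * (t * (1 - t) / √(1 + t * (1 - t) * ‖x‖ ^ 2) ^ 5) := by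
  have hM := one_add_mul_mul_pos (sq_nonneg ‖x‖) ht
  have h := integral_inv_sq_add_norm_sq_pow_four (sqrt_pos.2 hM)
  rw [← integral_sub_right_eq_self _ (t • x)] at h
  simp only [feynman_denominator, div_eq_mul_one_div (6 * (t * (1 - t)))]
  rw [integral_const_mul]
  rw [sq_sqrt hM.le] at h
  rw [h]
  ring

lemma integrable_feynman_shifted (x : EuclideanSpace ℝ (Fin 3)) {t : ℝ}
    (ht : t ∈ Set.Icc (0 : ℝ) 1) :
    Integrable fun y : EuclideanSpace ℝ (Fin 3) =>
      6 * (t * (1 - t)) / (t * (1 + ‖x - y‖ ^ 2) + (1 - t) * (1 + ‖y‖ ^ 2)) ^ 4 := by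
  have hM := one_add_mul_mul_pos (sq_nonneg ‖x‖) ht
  have h := (integrable_inv_sq_add_norm_sq_pow_four (sqrt_pos.2 hM)).comp_sub_right (t • x)
  rw [sq_sqrt hM.le] at h
  simp only [feynman_denominator, div_eq_mul_one_div (6 * (t * (1 - t)))]
  exact h.const_mul _

lemma integrable_feynman_prod (x : EuclideanSpace ℝ (Fin 3)) :
    Integrable (Function.uncurry fun (t : ℝ) (y : EuclideanSpace ℝ (Fin 3)) =>
      6 * (t * (1 - t)) / (t * (1 + ‖x - y‖ ^ 2) + (1 - t) * (1 + ‖y‖ ^ 2)) ^ 4)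
      ((volume.restrict (Set.Ioc (0 : ℝ) 1)).prod volume) := by
  have hmem : ∀ᵐ t ∂volume.restrict (Set.Ioc (0 : ℝ) 1), t ∈ Set.Icc (0 : ℝ) 1 := by
    filter_upwards [ae_restrict_mem measurableSet_Ioc] with t ht using Set.Ioc_subset_Icc_self ht
  rw [integrable_prod_iff]
  · refine ⟨?_, ?_⟩
    · filter_upwards [hmem] with t ht using integrable_feynman_shifted x ht
    · have hint : IntegrableOn (fun t : ℝ =>
          3 * π ^ 2 / 4 * (t * (1 - t) / √(1 + t * (1 - t) * ‖x‖ ^ 2) ^ 5)) (Set.Ioc 0 1) := by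
        refine IntegrableOn.mono_set (ContinuousOn.integrableOn_Icc ?_) Set.Ioc_subset_Icc_self
        refine continuousOn_const.mul (ContinuousOn.div (by fun_prop) (by fun_prop) ?_)
        exact fun t ht => (pow_pos (sqrt_pos.2 (one_add_mul_mul_pos (sq_nonneg _) ht)) 5).ne'
      refine hint.congr ?_
      filter_upwards [hmem] with t ht
      rw [← integral_feynman_shifted x ht]
      refine integral_congr_ae (Eventually.of_forall fun y => ?_)
      have h1 := mul_nonneg ht.1 (sub_nonneg.2 ht.2)
      simp only [Function.uncurry]
      rw [norm_of_nonneg]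
      exact div_nonneg (by positivity) (by positivity)
  · refine Measurable.aestronglyMeasurable ?_
    simp only [Function.uncurry_def]
    fun_prop

lemma convolution_inv_sq_one_add_norm_sq (x : EuclideanSpace ℝ (Fin 3)) :
    ∫ y : EuclideanSpace ℝ (Fin 3), 1 / ((1 + ‖x - y‖ ^ 2) ^ 2 * (1 + ‖y‖ ^ 2) ^ 2)
      = 2 * π ^ 2 / (4 + ‖x‖ ^ 2) ^ 2 := by
  have h1 : ∀ y : EuclideanSpace ℝ (Fin 3),
      1 / ((1 + ‖x - y‖ ^ 2) ^ 2 * (1 + ‖y‖ ^ 2) ^ 2) = ∫ t in Set.Ioc (0 : ℝ) 1,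
        6 * (t * (1 - t)) / (t * (1 + ‖x - y‖ ^ 2) + (1 - t) * (1 + ‖y‖ ^ 2)) ^ 4 := by
    intro y
    rw [← intervalIntegral.integral_of_le zero_le_one,
      integral_feynman_sq_sq (by positivity) (by positivity)]
  simp only [h1]
  rw [← integral_integral_swap (integrable_feynman_prod x),
    setIntegral_congr_fun measurableSet_Ioc
      (fun t ht => integral_feynman_shifted x (Set.Ioc_subset_Icc_self ht)),
    ← intervalIntegral.integral_of_le zero_le_one, intervalIntegral.integral_const_mul,
    integral_mul_div_sqrt_pow_five (sq_nonneg _)]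
  ring

lemma convolution_scaled {b : ℝ} (hb : 0 < b) (c : ℝ) (x : EuclideanSpace ℝ (Fin 3)) :
    ∫ y : EuclideanSpace ℝ (Fin 3),
        c / (1 + b ^ 2 * ‖x - y‖ ^ 2) ^ 2 * (c / (1 + b ^ 2 * ‖y‖ ^ 2) ^ 2)
      = c ^ 2 * (2 * π ^ 2) / (b ^ 3 * (4 + b ^ 2 * ‖x‖ ^ 2) ^ 2) := by
  have hn : ∀ z : EuclideanSpace ℝ (Fin 3), ‖b • z‖ ^ 2 = b ^ 2 * ‖z‖ ^ 2 := by
    intro z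
    rw [norm_smul, mul_pow, norm_eq_abs, sq_abs]
  have h := Measure.integral_comp_smul volume (fun z : EuclideanSpace ℝ (Fin 3) =>
    1 / ((1 + ‖b • x - z‖ ^ 2) ^ 2 * (1 + ‖z‖ ^ 2) ^ 2)) b
  rw [convolution_inv_sq_one_add_norm_sq (b • x)] at h
  simp only [← smul_sub, hn, finrank_euclideanSpace, Fintype.card_fin, smul_eq_mul,
    abs_of_pos (inv_pos.2 (pow_pos hb 3))] at h
  have hc : ∀ y : EuclideanSpace ℝ (Fin 3),
      c / (1 + b ^ 2 * ‖x - y‖ ^ 2) ^ 2 * (c / (1 + b ^ 2 * ‖y‖ ^ 2) ^ 2)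
        = c ^ 2 * (1 / ((1 + b ^ 2 * ‖x - y‖ ^ 2) ^ 2 * (1 + b ^ 2 * ‖y‖ ^ 2) ^ 2)) := by
    intro y
    rw [div_mul_div_comm, mul_one_div, sq c]
  simp only [hc]
  rw [integral_const_mul, h]
  field_simp

lemma hasFDerivAt_div_one_add_norm_sq_pow {E : Type*} [NormedAddCommGroup E]
    [InnerProductSpace ℝ E] (b c : ℝ) (n : ℕ) (x : E) :
    HasFDerivAt (fun x : E => c / (1 + b ^ 2 * ‖x‖ ^ 2) ^ n)
      ((-(2 * n * c * b ^ 2) / (1 + b ^ 2 * ‖x‖ ^ 2) ^ (n + 1)) • innerSL ℝ x) x := by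
  have hD : 1 + b ^ 2 * ‖x‖ ^ 2 ≠ 0 := by positivity
  have hg : HasDerivAt (fun s : ℝ => c / (1 + b ^ 2 * s) ^ n)
      (-(n * c * b ^ 2) / (1 + b ^ 2 * ‖x‖ ^ 2) ^ (n + 1)) (‖x‖ ^ 2) := by
    have h1 : HasDerivAt (fun s : ℝ => 1 + b ^ 2 * s) (b ^ 2) (‖x‖ ^ 2) := by
      simpa using ((hasDerivAt_id (‖x‖ ^ 2)).const_mul (b ^ 2)).const_add 1
    have := (hasDerivAt_const (‖x‖ ^ 2) c).div (h1.pow n) (pow_ne_zero n hD)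
    refine this.congr_deriv ?_
    rcases n with _ | n
    · simp
    · simp only [Pi.pow_apply, Nat.add_sub_cancel]
      field_simp
      ring
  have := hg.comp_hasFDerivAt x (hasStrictFDerivAt_norm_sq x).hasFDerivAt
  refine this.congr_fderiv ?_
  ext z
  simp
  ring

lemma laplacian3_div_one_add_norm_sq_sq (b c : ℝ) (x : EuclideanSpace ℝ (Fin 3)) :
    laplacian3 (fun x => c / (1 + b ^ 2 * ‖x‖ ^ 2) ^ 2) x
      = 24 * c * b ^ 4 * ‖x‖ ^ 2 / (1 + b ^ 2 * ‖x‖ ^ 2) ^ 4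
        - 12 * c * b ^ 2 / (1 + b ^ 2 * ‖x‖ ^ 2) ^ 3 := by
  have h1 : fderiv ℝ (fun x : EuclideanSpace ℝ (Fin 3) => c / (1 + b ^ 2 * ‖x‖ ^ 2) ^ 2)
      = fun x => (-(4 * c * b ^ 2) / (1 + b ^ 2 * ‖x‖ ^ 2) ^ 3) • innerSL ℝ x := by
    funext y
    rw [(hasFDerivAt_div_one_add_norm_sq_pow b c 2 y).fderiv]
    norm_num
  have h2 := (hasFDerivAt_div_one_add_norm_sq_pow b (-(4 * c * b ^ 2)) 3 x).smul
    (innerSL ℝ (E := EuclideanSpace ℝ (Fin 3))).hasFDerivAt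
  have h3 : ∀ w : EuclideanSpace ℝ (Fin 3),
      fderiv ℝ (fun x : EuclideanSpace ℝ (Fin 3) =>
        (-(4 * c * b ^ 2) / (1 + b ^ 2 * ‖x‖ ^ 2) ^ 3) • innerSL ℝ x) x w w
      = -(4 * c * b ^ 2) / (1 + b ^ 2 * ‖x‖ ^ 2) ^ 3 * inner ℝ w w
        + -(2 * (3 : ℕ) * -(4 * c * b ^ 2) * b ^ 2) / (1 + b ^ 2 * ‖x‖ ^ 2) ^ 4
          * inner ℝ x w * inner ℝ x w :=
    fun w => congrArg (fun L => L w w) h2.fderiv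
  have hn : x 0 ^ 2 + x 1 ^ 2 + x 2 ^ 2 = ‖x‖ ^ 2 := by
    simp [EuclideanSpace.norm_sq_eq, Fin.sum_univ_three]
  simp only [laplacian3, iteratedFDeriv_two_apply, h1, Matrix.cons_val_zero, Matrix.cons_val_one,
    h3, Fin.sum_univ_three, EuclideanSpace.inner_single_right, PiLp.single_apply,
    if_true, map_one, one_mul, conj_trivial, Nat.cast_ofNat]
  rw [← hn]
  generalize 1 + b ^ 2 * (x 0 ^ 2 + x 1 ^ 2 + x 2 ^ 2) = D
  ring

theorem stmt_5 (e b c : ℝ) (he : 0 < e) (hb : 0 < b) (hc : 0 < c)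
    (heb : 7 / 9 ≤ e / b ^ 2) (hc1 : c ≤ 1)
    (u : EuclideanSpace ℝ (Fin 3) → ℝ)
    (hu : ∀ x, u x = c / (1 + b ^ 2 * ‖x‖ ^ 2) ^ 2)
    (ρ : ℝ) (hρ : ρ = b ^ 3 / (c * π ^ 2))
    (v : EuclideanSpace ℝ (Fin 3) → ℝ)
    (hv : ∀ x, v x = (-(laplacian3 u x)
        + 2 * e * (2 * u x - ρ * ∫ y, u (x - y) * u y)) / (1 - u x)) :
    ∀ x, v x = 12 * c * (b ^ 6 * ‖x‖ ^ 6 * (2 * e - b ^ 2)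
          + b ^ 4 * ‖x‖ ^ 4 * (9 * e - 7 * b ^ 2)
          + 4 * b ^ 2 * ‖x‖ ^ 2 * (3 * e - 2 * b ^ 2)
          + (5 * e + 16 * b ^ 2))
        / ((1 + b ^ 2 * ‖x‖ ^ 2) ^ 2 * (4 + b ^ 2 * ‖x‖ ^ 2) ^ 2
            * ((1 + b ^ 2 * ‖x‖ ^ 2) ^ 2 - c))
      ∧ 0 ≤ v x := by
  intro x
  have hval : v x = 12 * c * (b ^ 6 * ‖x‖ ^ 6 * (2 * e - b ^ 2)
          + b ^ 4 * ‖x‖ ^ 4 * (9 * e - 7 * b ^ 2)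
          + 4 * b ^ 2 * ‖x‖ ^ 2 * (3 * e - 2 * b ^ 2)
          + (5 * e + 16 * b ^ 2))
        / ((1 + b ^ 2 * ‖x‖ ^ 2) ^ 2 * (4 + b ^ 2 * ‖x‖ ^ 2) ^ 2
            * ((1 + b ^ 2 * ‖x‖ ^ 2) ^ 2 - c)) := by
    obtain rfl : u = fun x => c / (1 + b ^ 2 * ‖x‖ ^ 2) ^ 2 := funext hu
    rw [hv, laplacian3_div_one_add_norm_sq_sq]
    simp only
    rw [convolution_scaled hb, hρ]
    have h1 : 1 + b ^ 2 * ‖x‖ ^ 2 ≠ 0 := by positivity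
    have h4 : 4 + b ^ 2 * ‖x‖ ^ 2 ≠ 0 := by positivity
    have hsub : 1 - c / (1 + b ^ 2 * ‖x‖ ^ 2) ^ 2
        = ((1 + b ^ 2 * ‖x‖ ^ 2) ^ 2 - c) / (1 + b ^ 2 * ‖x‖ ^ 2) ^ 2 := by
      field_simp
    rw [hsub, ← div_div _ _ ((1 + b ^ 2 * ‖x‖ ^ 2) ^ 2 - c), div_div_eq_mul_div]
    congr 1
    field_simp
    ring
  refine ⟨hval, ?_⟩
  rw [le_div_iff₀ (by positivity)] at heb
  have hb2 : 0 < b ^ 2 := by positivity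
  have h2 : 0 ≤ 2 * e - b ^ 2 := by linarith
  have h9 : 0 ≤ 9 * e - 7 * b ^ 2 := by linarith
  have h3 : 0 ≤ 3 * e - 2 * b ^ 2 := by linarith
  have hden : 0 ≤ (1 + b ^ 2 * ‖x‖ ^ 2) ^ 2 - c := by
    have : 0 ≤ b ^ 2 * ‖x‖ ^ 2 := by positivity
    nlinarith
  rw [hval]
  positivity
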